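/- Assume a, d ∈ L^∞((0,1);ℝ), b, c : [0,1] → ℝ of bounded variation, and |r₀r₁| ≠ e^{α(1)+δ(1)}. Then the set of integers k ∈ ℤ for which there exists a pair (φ,ψ) ≠ (0,0) of absolutely continuous functions [0,1] → ℂ satisfying −φ'(x) + (a(x) − ikω) φ(x) + c(x) ψ(x) = 0 and ψ'(x) + (d(x) − ikω) ψ(x) + b(x) φ(x) = 0 for almost every x ∈ (0,1), together with ψ(0) = r₀ φ(0) and φ(1) = r₁ ψ(1), is finite. -/

import Mathlib

open MeasureTheory Set

/-- `u` is absolutely continuous on `[0,1]` with (a.e.) derivative `u'`: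
`u'` is integrable on `[0,1]` and `u` is the integral of `u'` there. -/
def IsACOn01 (u u' : ℝ → ℂ) : Prop :=
  IntervalIntegrable u' volume 0 1 ∧
  ∀ x ∈ Icc (0 : ℝ) 1, u x = u 0 + ∫ y in (0 : ℝ)..x, u' y

open Filter Topology

/-- absolutely continuous with a given a.e. derivative. -/
def Good (f f' : ℝ → ℂ) : Prop :=
  AbsolutelyContinuousOnInterval f 0 1 ∧ IntervalIntegrable f' volume 0 1 ∧
    ∀ᵐ x : ℝ, x ∈ Ioo (0:ℝ) 1 → HasDerivAt f (f' x) x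

lemma ac_congr {f g : ℝ → ℂ} (hf : AbsolutelyContinuousOnInterval f 0 1)
    (h : ∀ x ∈ Icc (0:ℝ) 1, f x = g x) : AbsolutelyContinuousOnInterval g 0 1 := by
  rw [absolutelyContinuousOnInterval_iff] at hf ⊢
  intro ε hε
  obtain ⟨δ, hδ, H⟩ := hf ε hε
  refine ⟨δ, hδ, fun E hE hs => ?_⟩
  refine lt_of_eq_of_lt (Finset.sum_congr rfl fun i hi => ?_) (H E hE hs)
  have := hE.1 i (by simpa using hi)
  rw [uIcc_of_le zero_le_one] at this
  rw [h _ this.1, h _ this.2]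

lemma ac_const (z : ℂ) : AbsolutelyContinuousOnInterval (fun _ : ℝ => z) 0 1 :=
  ((LipschitzWith.const (α := ℝ) z).lipschitzOnWith (s := uIcc 0 1)).absolutelyContinuousOnInterval

lemma ac_integral {f : ℝ → ℂ} (hf : IntervalIntegrable f volume 0 1) :
    AbsolutelyContinuousOnInterval (fun x => ∫ y in (0:ℝ)..x, f y) 0 1 := by
  have hre : IntervalIntegrable (fun x => (f x).re) volume 0 1 := ⟨hf.1.re, hf.2.re⟩
  have him : IntervalIntegrable (fun x => (f x).im) volume 0 1 := ⟨hf.1.im, hf.2.im⟩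
  have h1 := hre.absolutelyContinuousOnInterval_intervalIntegral (c := 0) (by simp)
  have h2 := him.absolutelyContinuousOnInterval_intervalIntegral (c := 0) (by simp)
  refine ac_congr ((h1.smul (ac_const 1)).add (h2.smul (ac_const Complex.I))) ?_
  intro x hx
  have hfx : IntervalIntegrable f volume 0 x := hf.mono_set (by
    rw [uIcc_of_le hx.1, uIcc_of_le zero_le_one]; exact Icc_subset_Icc_right hx.2)
  simp only [Pi.add_apply, Pi.smul_apply', Complex.real_smul, mul_one]
  have e1 := Complex.reCLM.intervalIntegral_comp_comm hfx
  have e2 := Complex.imCLM.intervalIntegral_comp_comm hfx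
  simp only [Complex.reCLM_apply, Complex.imCLM_apply] at e1 e2
  rw [e1, e2, Complex.re_add_im]

lemma Good.eq {f f' : ℝ → ℂ} (h : Good f f') {x : ℝ} (hx : x ∈ Icc (0:ℝ) 1) :
    f x = f 0 + ∫ y in (0:ℝ)..x, f' y := by
  obtain ⟨h1, h2, h3⟩ := h
  have hne0 : ∀ᵐ x : ℝ, x ≠ 0 := by simp [ae_iff, measure_singleton]
  have hne1 : ∀ᵐ x : ℝ, x ≠ 1 := by simp [ae_iff, measure_singleton]
  have key := (h1.sub (ac_integral h2)).const_of_ae_hasDerivAt_zero (by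
    filter_upwards [h3, h2.ae_hasDerivAt_integral, hne0, hne1] with x a b c d e
    have e' := e
    rw [uIcc_of_le zero_le_one] at e'
    have := (a ⟨lt_of_le_of_ne e'.1 (Ne.symm c), lt_of_le_of_ne e'.2 d⟩).sub (b e 0 (by simp))
    simpa using this)
  obtain ⟨C, hC⟩ := key
  rw [uIcc_of_le zero_le_one] at hC
  have a := hC x hx
  have b := hC 0 (by simp)
  simp at a b
  rw [b, ← a]; ring

lemma good_of_isAC {u u' : ℝ → ℂ} (h : IsACOn01 u u') : Good u u' := by
  obtain ⟨h1, h2⟩ := h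
  refine ⟨ac_congr ((ac_const (u 0)).add (ac_integral h1)) fun x hx => (h2 x hx).symm, h1, ?_⟩
  filter_upwards [h1.ae_hasDerivAt_integral] with x hx hx'
  have := (hx (by rw [uIcc_of_le zero_le_one]; exact Ioo_subset_Icc_self hx') 0 (by simp)).const_add (u 0)
  refine this.congr_of_eventuallyEq ?_
  filter_upwards [Ioo_mem_nhds hx'.1 hx'.2] with y hy
  exact h2 y (Ioo_subset_Icc_self hy)

lemma Good.cont {f f' : ℝ → ℂ} (h : Good f f') : ContinuousOn f (Icc 0 1) := by
  have := h.1.continuousOn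
  rwa [uIcc_of_le zero_le_one] at this

lemma Good.cont' {f f' : ℝ → ℂ} (h : Good f f') : ContinuousOn f (uIcc 0 1) := h.1.continuousOn

lemma Good.mul {f f' g g' : ℝ → ℂ} (hf : Good f f') (hg : Good g g') :
    Good (fun x => f x * g x) (fun x => f' x * g x + f x * g' x) := by
  refine ⟨hf.1.smul hg.1, (hf.2.1.mul_continuousOn hg.cont').add
    (hg.2.1.continuousOn_mul hf.cont'), ?_⟩
  filter_upwards [hf.2.2, hg.2.2] with x a b c
  exact (a c).mul (b c)

lemma Good.congr_deriv {f f' g' : ℝ → ℂ} (hf : Good f f')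
    (h : ∀ᵐ x : ℝ, x ∈ Ioo (0:ℝ) 1 → f' x = g' x) : Good f g' := by
  refine ⟨hf.1, ?_, ?_⟩
  · have hi := hf.2.1
    rw [intervalIntegrable_iff_integrableOn_Ioo_of_le zero_le_one] at hi ⊢
    refine hi.congr ?_
    exact (ae_restrict_iff' measurableSet_Ioo).2 h
  · filter_upwards [hf.2.2, h] with x a b c
    rw [← b c]; exact a c

lemma Good.cexp {f f' : ℝ → ℂ} (hf : Good f f') :
    Good (fun x => Complex.exp (f x)) (fun x => Complex.exp (f x) * f' x) := by
  refine ⟨?_, hf.2.1.continuousOn_mul (Complex.continuous_exp.comp_continuousOn hf.cont'), ?_⟩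
  · obtain ⟨C, hC⟩ := hf.1.exists_bound
    have hL : ∀ z ∈ Metric.closedBall (0:ℂ) C, ∀ w ∈ Metric.closedBall (0:ℂ) C,
        ‖Complex.exp w - Complex.exp z‖ ≤ Real.exp C * ‖w - z‖ := by
      intro z hz w hw
      refine (convex_closedBall (0:ℂ) C).norm_image_sub_le_of_norm_deriv_le (𝕜 := ℂ)
        (fun _ _ => Complex.differentiableAt_exp) ?_ hz hw
      intro x hx
      rw [Complex.deriv_exp, Complex.norm_exp]
      refine Real.exp_le_exp.2 ((Complex.re_le_norm x).trans ?_)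
      simpa using hx
    have h1 := hf.1
    unfold AbsolutelyContinuousOnInterval at h1 ⊢
    refine squeeze_zero' (Eventually.of_forall fun _ => Finset.sum_nonneg fun _ _ => dist_nonneg)
      ?_ (by simpa using h1.const_mul (Real.exp C))
    rw [eventually_inf_principal]
    filter_upwards with E hE
    rw [Finset.mul_sum]
    refine Finset.sum_le_sum fun i hi => ?_
    have := hE.1 i (by simpa using hi)
    rw [dist_eq_norm, dist_eq_norm]
    exact hL _ (by simpa using hC _ this.2) _ (by simpa using hC _ this.1)
  · filter_upwards [hf.2.2] with x a b
    exact (a b).cexp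

lemma Good.cont_ext {f : ℝ → ℝ} (h : ContinuousOn f (Icc 0 1)) :
    ∃ g : ℝ → ℝ, Continuous g ∧ ∀ x ∈ Icc (0:ℝ) 1, g x = f x :=
  ⟨IccExtend zero_le_one (domRestrict (Icc (0:ℝ) 1) f),
    (continuousOn_iff_continuous_domRestrict.1 h).Icc_extend',
    fun x hx => by rw [IccExtend_of_mem _ _ hx]; rfl⟩

lemma gronwall_int {N : ℝ → ℝ} {M N0 : ℝ} (hM : 0 ≤ M) (hN : ContinuousOn N (Icc 0 1))
    (h : ∀ x ∈ Icc (0:ℝ) 1, N x ≤ N0 + M * ∫ y in (0:ℝ)..x, N y) :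
    ∀ x ∈ Icc (0:ℝ) 1, N x ≤ N0 * Real.exp (M * x) := by
  obtain ⟨g, hg, hgN⟩ := Good.cont_ext hN
  have hint : ∀ x ∈ Icc (0:ℝ) 1, ∫ y in (0:ℝ)..x, N y = ∫ y in (0:ℝ)..x, g y := by
    intro x hx
    refine intervalIntegral.integral_congr fun y hy => ?_
    rw [uIcc_of_le hx.1] at hy
    exact (hgN y ⟨hy.1, hy.2.trans hx.2⟩).symm
  have hd : ∀ x, HasDerivAt (fun x => N0 + M * ∫ y in (0:ℝ)..x, g y) (M * g x) x := fun x =>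
    ((hg.integral_hasStrictDerivAt 0 x).hasDerivAt.const_mul M).const_add N0
  have hb : ∀ x ∈ Icc (0:ℝ) 1, g x ≤ N0 + M * ∫ y in (0:ℝ)..x, g y := by
    intro x hx
    rw [← hint x hx, hgN x hx]; exact h x hx
  intro x hx
  have := le_gronwallBound_of_liminf_deriv_right_le (f := fun x => N0 + M * ∫ y in (0:ℝ)..x, g y)
    (f' := fun x => M * g x) (δ := N0) (K := M) (ε := 0) (a := 0) (b := 1)
    (fun x _ => (hd x).continuousAt.continuousWithinAt)
    (fun x hx r hr => (hd x).hasDerivWithinAt.liminf_right_slope_le hr)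
    (by simp)
    (fun x hx => by
      have := mul_le_mul_of_nonneg_left (hb x (Ico_subset_Icc_self hx)) hM
      simpa using this) x hx
  rw [gronwallBound_ε0, sub_zero] at this
  rw [← hgN x hx]
  exact (hb x hx).trans this

/-- oscillatory primitive -/
noncomputable def osc (p : ℝ → ℂ) (t x : ℝ) : ℂ :=
  ∫ y in (0:ℝ)..x, p y * Complex.exp ((t * y : ℝ) * Complex.I)

/-- size of the oscillatory primitive -/
noncomputable def rho (p : ℝ → ℂ) (t : ℝ) : ℝ :=
  ‖osc p t 1‖ + ∫ x in (0:ℝ)..1, ‖osc p t x‖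

lemma osc_integrable {p : ℝ → ℂ} (hp : IntervalIntegrable p volume 0 1) (t : ℝ) :
    IntervalIntegrable (fun y : ℝ => p y * Complex.exp ((t * y : ℝ) * Complex.I)) volume 0 1 :=
  hp.mul_continuousOn (by fun_prop)

lemma osc_good {p : ℝ → ℂ} (hp : IntervalIntegrable p volume 0 1) (t : ℝ) :
    Good (osc p t) (fun y : ℝ => p y * Complex.exp ((t * y : ℝ) * Complex.I)) :=
  good_of_isAC ⟨osc_integrable hp t, fun x _ => by simp [osc]⟩

lemma osc_tendsto {p : ℝ → ℂ} {τ : ℝ} (hτ : τ ≠ 0)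
    {x : ℝ} (hx : x ∈ Icc (0:ℝ) 1) :
    Tendsto (fun k : ℤ => osc p (k * τ) x) cofinite (𝓝 0) := by
  have h1 := Real.tendsto_integral_exp_smul_cocompact ((Ioc 0 x).indicator p)
  have h2 : Tendsto (fun k : ℤ => (-τ / (2 * Real.pi)) * (k:ℝ)) cofinite (cocompact ℝ) :=
    (Filter.tendsto_cocompact_mul_left₀ (a := -τ / (2 * Real.pi))
      (div_ne_zero (neg_ne_zero.2 hτ) (by positivity))).comp Int.tendsto_coe_cofinite
  refine (h1.comp h2).congr fun k => ?_
  simp only [Function.comp_apply, osc]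
  rw [intervalIntegral.integral_of_le hx.1, ← integral_indicator measurableSet_Ioc]
  congr 1
  ext y
  by_cases hy : y ∈ Ioc 0 x
  · simp only [indicator_of_mem hy]
    rw [Circle.smul_def, Real.fourierChar_apply, smul_eq_mul, mul_comm]
    congr 3
    push_cast
    have : (Real.pi : ℂ) ≠ 0 := by exact_mod_cast Real.pi_ne_zero
    field_simp
  · simp [indicator_of_notMem hy]

lemma rho_tendsto {p : ℝ → ℂ} (hp : IntervalIntegrable p volume 0 1) {τ : ℝ} (hτ : τ ≠ 0) :
    Tendsto (fun k : ℤ => rho p (k * τ)) cofinite (𝓝 0) := by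
  have h1 := (osc_tendsto (p := p) hτ (x := 1) (by simp)).norm
  have : (cofinite : Filter ℤ).IsCountablyGenerated := by
    rw [Int.cofinite_eq]; infer_instance
  have h2 : Tendsto (fun k : ℤ => ∫ x in (0:ℝ)..1, ‖osc p (k * τ) x‖) cofinite
      (𝓝 (∫ x in (0:ℝ)..1, (0:ℝ))) := by
    refine intervalIntegral.tendsto_integral_filter_of_dominated_convergence
      (fun _ => ∫ y in (0:ℝ)..1, ‖p y‖) ?_ ?_ (by simp) ?_
    · refine Eventually.of_forall fun k => ?_
      rw [uIoc_of_le zero_le_one]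
      exact ((osc_good hp _).cont.norm.mono Ioc_subset_Icc_self).aestronglyMeasurable
        measurableSet_Ioc
    · refine Eventually.of_forall fun k => ae_of_all _ fun x hx => ?_
      rw [uIoc_of_le zero_le_one] at hx
      rw [norm_norm, osc]
      refine (intervalIntegral.norm_integral_le_integral_norm hx.1.le).trans ?_
      simp only [norm_mul, Complex.norm_exp_ofReal_mul_I, mul_one]
      exact intervalIntegral.integral_mono_interval le_rfl hx.1.le hx.2
        (ae_of_all _ fun _ => norm_nonneg _) hp.norm
    · refine ae_of_all _ fun x hx => ?_
      rw [uIoc_of_le zero_le_one] at hx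
      simpa using (osc_tendsto (p := p) hτ (Ioc_subset_Icc_self hx)).norm
  simpa [rho] using h1.add h2

lemma est {p q u v : ℝ → ℂ} {t s M B : ℝ} (hp : IntervalIntegrable p volume 0 1)
    (hu : Good u (fun x => p x * Complex.exp ((t * x : ℝ) * Complex.I) * v x))
    (hv : Good v (fun x => q x * Complex.exp ((s * x : ℝ) * Complex.I) * u x))
    (hM : 0 ≤ M) (hB : 0 ≤ B)
    (hq : ∀ x ∈ Icc (0:ℝ) 1, ‖q x‖ ≤ M)
    (hub : ∀ x ∈ Icc (0:ℝ) 1, ‖u x‖ ≤ B) (hvb : ∀ x ∈ Icc (0:ℝ) 1, ‖v x‖ ≤ B) :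
    ‖u 1 - u 0‖ ≤ B * (1 + M) * rho p t := by
  have ho := osc_good hp t
  have h1 := (ho.mul hv).eq (x := 1) (by simp)
  have h2 := hu.eq (x := 1) (by simp)
  have h0 : osc p t 0 = 0 := by simp [osc]
  rw [intervalIntegral.integral_add hu.2.1 (hv.2.1.continuousOn_mul ho.cont')] at h1
  have h3 : u 1 - u 0 = osc p t 1 * v 1 - ∫ x in (0:ℝ)..1, osc p t x *
      (q x * Complex.exp ((s * x : ℝ) * Complex.I) * u x) := by
    rw [h2, h1, h0]; ring
  rw [h3]
  refine (norm_sub_le _ _).trans ?_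
  have e1 : ‖osc p t 1 * v 1‖ ≤ B * ‖osc p t 1‖ := by
    rw [norm_mul, mul_comm]
    exact mul_le_mul_of_nonneg_right (hvb 1 (by simp)) (norm_nonneg _)
  have hni : IntervalIntegrable (fun x => ‖osc p t x‖) volume 0 1 :=
    ho.cont'.norm.intervalIntegrable
  have e2 : ‖∫ x in (0:ℝ)..1, osc p t x * (q x * Complex.exp ((s * x : ℝ) * Complex.I) * u x)‖
      ≤ (M * B) * ∫ x in (0:ℝ)..1, ‖osc p t x‖ := by
    rw [← intervalIntegral.integral_const_mul]
    refine intervalIntegral.norm_integral_le_of_norm_le zero_le_one (ae_of_all _ fun x hx => ?_)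
      (hni.const_mul _)
    have hx' := Ioc_subset_Icc_self hx
    rw [norm_mul, norm_mul, norm_mul, Complex.norm_exp_ofReal_mul_I, mul_one, mul_comm]
    exact mul_le_mul_of_nonneg_right (mul_le_mul (hq x hx') (hub x hx') (norm_nonneg _) hM)
      (norm_nonneg _)
  have e3 : 0 ≤ ∫ x in (0:ℝ)..1, ‖osc p t x‖ :=
    intervalIntegral.integral_nonneg zero_le_one fun _ _ => norm_nonneg _
  have e4 := norm_nonneg (osc p t 1)
  unfold rho
  nlinarith [mul_nonneg hB e3, mul_nonneg (mul_nonneg hM hB) e4]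

lemma apriori {p q u v : ℝ → ℂ} {t s M : ℝ}
    (hu : Good u (fun x => p x * Complex.exp ((t * x : ℝ) * Complex.I) * v x))
    (hv : Good v (fun x => q x * Complex.exp ((s * x : ℝ) * Complex.I) * u x))
    (hM : 0 ≤ M)
    (hp : ∀ x ∈ Icc (0:ℝ) 1, ‖p x‖ ≤ M) (hq : ∀ x ∈ Icc (0:ℝ) 1, ‖q x‖ ≤ M) :
    ∀ x ∈ Icc (0:ℝ) 1, ‖u x‖ + ‖v x‖ ≤ (‖u 0‖ + ‖v 0‖) * Real.exp M := by
  have hint : ∀ {f f' : ℝ → ℂ}, Good f f' → ∀ x ∈ Icc (0:ℝ) 1,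
      IntervalIntegrable (fun y => ‖f y‖) volume 0 x := fun h x hx =>
    (h.cont'.norm.mono (by
      rw [uIcc_of_le hx.1, uIcc_of_le zero_le_one]
      exact Icc_subset_Icc_right hx.2)).intervalIntegrable
  have one : ∀ {f g r : ℝ → ℂ} {w : ℝ} {g' : ℝ → ℂ},
      Good f (fun x => r x * Complex.exp ((w * x : ℝ) * Complex.I) * g x) → Good g g' →
      (∀ x ∈ Icc (0:ℝ) 1, ‖r x‖ ≤ M) → ∀ x ∈ Icc (0:ℝ) 1,
      ‖f x‖ ≤ ‖f 0‖ + M * ∫ y in (0:ℝ)..x, ‖g y‖ := by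
    intro f g r w g' hf hg hr x hx
    rw [hf.eq hx]
    refine (norm_add_le _ _).trans (add_le_add le_rfl ?_)
    rw [← intervalIntegral.integral_const_mul]
    refine intervalIntegral.norm_integral_le_of_norm_le hx.1 (ae_of_all _ fun y hy => ?_)
      ((hint hg x hx).const_mul _)
    rw [norm_mul, norm_mul, Complex.norm_exp_ofReal_mul_I, mul_one]
    exact mul_le_mul_of_nonneg_right (hr y ⟨hy.1.le, hy.2.trans hx.2⟩) (norm_nonneg _)
  intro x hx
  have := gronwall_int (N := fun x => ‖u x‖ + ‖v x‖) (N0 := ‖u 0‖ + ‖v 0‖) hM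
    (hu.cont.norm.add hv.cont.norm) (fun x hx => by
      rw [intervalIntegral.integral_add (hint hu x hx) (hint hv x hx)]
      have a := one hu hv hp x hx
      have b := one hv hu hq x hx
      linarith) x hx
  refine this.trans (mul_le_mul_of_nonneg_left (Real.exp_le_exp.2 ?_) (by positivity))
  nlinarith [hx.2]

lemma Good.lin {f f' : ℝ → ℂ} (h : Good f f') (z w : ℂ) :
    Good (fun x => z * f x + w * (x:ℂ)) (fun x => z * f' x + w) := by
  have hid : Good (fun x : ℝ => w * (x:ℂ)) (fun _ => w) :=
    good_of_isAC ⟨by simp, fun x _ => by simp [mul_comm]⟩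
  refine ⟨((ac_const z).smul h.1).add hid.1, (h.2.1.const_mul z).add hid.2.1, ?_⟩
  filter_upwards [h.2.2, hid.2.2] with x a b c
  exact ((a c).const_mul z).add (b c)

lemma good_prim {a : ℝ → ℝ} (ha : Measurable a) {C : ℝ} (haB : ∀ x, |a x| ≤ C) {α : ℝ → ℝ}
    (hα : ∀ x, α x = ∫ y in (0:ℝ)..x, a y) :
    Good (fun x => (α x : ℂ)) (fun x => (a x : ℂ)) := by
  have hi : IntervalIntegrable (fun x => (a x : ℂ)) volume 0 1 := by
    refine (intervalIntegrable_const (c := C)).mono_fun (by fun_prop) (ae_of_all _ fun x => ?_)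
    simpa using (haB x).trans (le_abs_self C)
  refine good_of_isAC ⟨hi, fun x _ => ?_⟩
  beta_reduce
  rw [hα x, hα 0]
  simp [intervalIntegral.integral_ofReal]

lemma bv_integrable {b : ℝ → ℝ} (hb : BoundedVariationOn b (Icc (0:ℝ) 1)) :
    IntervalIntegrable (fun x => (b x : ℂ)) volume 0 1 := by
  obtain ⟨f, g, hf, hg, rfl⟩ := hb.locallyBoundedVariationOn.exists_monotoneOn_sub_monotoneOn
  rw [← uIcc_of_le zero_le_one] at hf hg
  have := (hf.intervalIntegrable (μ := volume)).sub (hg.intervalIntegrable (μ := volume))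
  exact ⟨this.1.ofReal, this.2.ofReal⟩

lemma bv_mul {b : ℝ → ℝ} (hb : BoundedVariationOn b (Icc (0:ℝ) 1)) {g : ℝ → ℂ}
    (hg : ContinuousOn g (Icc 0 1)) :
    IntervalIntegrable (fun x => (b x : ℂ) * g x) volume 0 1 ∧
      ∃ M, 0 ≤ M ∧ ∀ x ∈ Icc (0:ℝ) 1, ‖(b x : ℂ) * g x‖ ≤ M := by
  refine ⟨(bv_integrable hb).mul_continuousOn (by rwa [uIcc_of_le zero_le_one]), ?_⟩
  obtain ⟨C, hC⟩ := isCompact_Icc.exists_bound_of_continuousOn hg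
  have hC0 : 0 ≤ C := (norm_nonneg _).trans (hC 0 (by simp))
  refine ⟨(|b 0| + (eVariationOn b (Icc 0 1)).toReal) * C, by positivity, fun x hx => ?_⟩
  rw [norm_mul]
  refine mul_le_mul ?_ (hC x hx) (norm_nonneg _) (by positivity)
  have := hb.dist_le hx (show (0:ℝ) ∈ Icc (0:ℝ) 1 by simp)
  rw [Real.dist_eq] at this
  have h2 := abs_sub_abs_le_abs_sub (b x) (b 0)
  rw [Complex.norm_real, Real.norm_eq_abs]
  linarith

/-- under `a, d ∈ L^∞`, `b, c` of bounded variation and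
`|r₀r₁| ≠ e^{α(1)+δ(1)}`, the set of `k ∈ ℤ` for which the homogeneous adjoint
boundary value problem `−φ' + (a − ikω)φ + cψ = 0`, `ψ' + (d − ikω)ψ + bφ = 0`
a.e. on `(0,1)` with `ψ(0) = r₀φ(0)`, `φ(1) = r₁ψ(1)` has a nontrivial solution
is finite. -/
theorem stmt11 (ω r₀ r₁ : ℝ) (hω : 0 < ω) (a d : ℝ → ℝ)
    (ha : Measurable a) (hd : Measurable d)
    (Ca Cd : ℝ) (haB : ∀ x, |a x| ≤ Ca) (hdB : ∀ x, |d x| ≤ Cd)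
    (b c : ℝ → ℝ)
    (hb : BoundedVariationOn b (Icc (0:ℝ) 1)) (hc : BoundedVariationOn c (Icc (0:ℝ) 1))
    (α δ : ℝ → ℝ)
    (hα : ∀ x, α x = ∫ y in (0:ℝ)..x, a y)
    (hδ : ∀ x, δ x = ∫ y in (0:ℝ)..x, d y)
    (hne : |r₀ * r₁| ≠ Real.exp (α 1 + δ 1)) :
    {k : ℤ | ∃ φ ψ φ' ψ' : ℝ → ℂ,
      IsACOn01 φ φ' ∧ IsACOn01 ψ ψ' ∧
      (∀ᵐ x ∂(volume.restrict (Ioo (0 : ℝ) 1)),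
        -φ' x + ((a x : ℂ) - (k : ℂ) * (ω : ℂ) * Complex.I) * φ x + ((c x : ℝ) : ℂ) * ψ x = 0) ∧
      (∀ᵐ x ∂(volume.restrict (Ioo (0 : ℝ) 1)),
        ψ' x + ((d x : ℂ) - (k : ℂ) * (ω : ℂ) * Complex.I) * ψ x + ((b x : ℝ) : ℂ) * φ x = 0) ∧
      ψ 0 = (r₀ : ℂ) * φ 0 ∧ φ 1 = (r₁ : ℂ) * ψ 1 ∧
      ∃ x ∈ Icc (0:ℝ) 1, φ x ≠ 0 ∨ ψ x ≠ 0}.Finite := by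
  have gα := good_prim ha haB hα
  have gδ := good_prim hd hdB hδ
  have hα0 : α 0 = 0 := by simp [hα 0]
  have hδ0 : δ 0 = 0 := by simp [hδ 0]
  obtain ⟨hpI, Mp, hMp, hpB⟩ := bv_mul hc (g := fun x => Complex.exp (-(α x : ℂ) - δ x))
    (Complex.continuous_exp.comp_continuousOn (gα.cont.neg.sub gδ.cont))
  obtain ⟨hqI, Mq, hMq, hqB⟩ := bv_mul hb (g := fun x => -Complex.exp ((α x : ℂ) + δ x))
    (Complex.continuous_exp.comp_continuousOn (gα.cont.add gδ.cont)).neg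
  set p : ℝ → ℂ := fun x => (c x : ℂ) * Complex.exp (-(α x : ℂ) - δ x) with hp
  set q : ℝ → ℂ := fun x => (b x : ℂ) * -Complex.exp ((α x : ℂ) + δ x) with hq
  set M := Mp + Mq with hM
  have hM0 : 0 ≤ M := by positivity
  have hpB' : ∀ x ∈ Icc (0:ℝ) 1, ‖p x‖ ≤ M := fun x hx => (hpB x hx).trans (by linarith)
  have hqB' : ∀ x ∈ Icc (0:ℝ) 1, ‖q x‖ ≤ M := fun x hx => (hqB x hx).trans (by linarith)
  have hτ : (2 * ω) ≠ 0 := by positivity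
  set K := (1 + |r₀|) * Real.exp M * (1 + M) with hK
  have hK0 : 0 ≤ K := by positivity
  set S := Real.exp (α 1 + δ 1) with hS
  have hS0 : 0 < S := Real.exp_pos _
  have hlim : Tendsto (fun k : ℤ => S * (K * rho p (k * (2 * ω))) +
      |r₁| * (K * rho q (k * (-(2 * ω))))) cofinite (𝓝 0) := by
    have := (((rho_tendsto hpI hτ).const_mul K).const_mul S).add
      (((rho_tendsto hqI (neg_ne_zero.2 hτ)).const_mul K).const_mul |r₁|)
    simpa using this
  have hpos : 0 < |S - (|r₀ * r₁|)| := abs_pos.2 (sub_ne_zero.2 (Ne.symm hne))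
  have hev := hlim.eventually (gt_mem_nhds hpos)
  rw [Filter.eventually_cofinite] at hev
  refine hev.subset ?_
  rintro k ⟨φ, ψ, φ', ψ', h1, h2, e1, e2, b0, b1, x₀, hx₀, hnz⟩
  rw [mem_ofPred_eq, not_lt]
  rw [ae_restrict_iff' measurableSet_Ioo] at e1 e2
  have g1 := good_of_isAC h1
  have g2 := good_of_isAC h2
  have gE1 := (gα.lin (-1) ((k:ℂ) * ω * Complex.I)).cexp
  have gE2 := (gδ.lin 1 (-((k:ℂ) * ω * Complex.I))).cexp
  set E1 : ℝ → ℂ := fun x => Complex.exp (-1 * (α x : ℂ) + (k:ℂ) * ω * Complex.I * x) with hE1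
  set E2 : ℝ → ℂ := fun x => Complex.exp (1 * (δ x : ℂ) + -((k:ℂ) * ω * Complex.I) * x) with hE2
  have hu : Good (fun x => E1 x * φ x) (fun x => p x *
      Complex.exp (((k * (2 * ω)) * x : ℝ) * Complex.I) * (E2 x * ψ x)) := by
    refine (gE1.mul g1).congr_deriv ?_
    filter_upwards [e1] with x hx hx'
    have h := hx hx'
    have hid : p x * Complex.exp (((k * (2 * ω)) * x : ℝ) * Complex.I) * E2 x = c x * E1 x := by
      simp only [hp, hE1, hE2]
      rw [mul_assoc, mul_assoc, ← Complex.exp_add, ← Complex.exp_add]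
      congr 2
      push_cast
      ring
    rw [← mul_assoc, hid]
    linear_combination (-E1 x) * h
  have hv : Good (fun x => E2 x * ψ x) (fun x => q x *
      Complex.exp (((k * (-(2 * ω))) * x : ℝ) * Complex.I) * (E1 x * φ x)) := by
    refine (gE2.mul g2).congr_deriv ?_
    filter_upwards [e2] with x hx hx'
    have h := hx hx'
    have hid : q x * Complex.exp (((k * (-(2 * ω))) * x : ℝ) * Complex.I) * E1 x
        = -(b x * E2 x) := by
      simp only [hq, hE1, hE2]
      rw [mul_neg, neg_mul, neg_mul, mul_assoc, mul_assoc, ← Complex.exp_add, ← Complex.exp_add]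
      congr 3
      push_cast
      ring
    rw [← mul_assoc, hid]
    linear_combination (E2 x) * h
  have hE10 : E1 0 = 1 := by simp [hE1, hα0]
  have hE20 : E2 0 = 1 := by simp [hE2, hδ0]
  have nE1 : ‖E1 1‖ = Real.exp (-α 1) := by
    rw [hE1, Complex.norm_exp]; simp
  have nE2 : ‖E2 1‖ = Real.exp (δ 1) := by
    rw [hE2, Complex.norm_exp]; simp
  have hap := apriori hu hv hM0 hpB' hqB'
  have hap' : ∀ x ∈ Icc (0:ℝ) 1, ‖E1 x * φ x‖ + ‖E2 x * ψ x‖ ≤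
      ‖φ 0‖ * ((1 + |r₀|) * Real.exp M) := by
    intro x hx
    refine (hap x hx).trans (le_of_eq ?_)
    rw [hE10, hE20, b0, one_mul, one_mul, norm_mul, Complex.norm_real, Real.norm_eq_abs]
    ring
  have hφ0 : 0 < ‖φ 0‖ := by
    rw [norm_pos_iff]
    intro h0
    have := hap' x₀ hx₀
    rw [h0, norm_zero, zero_mul] at this
    have t1 : ‖E1 x₀ * φ x₀‖ = 0 :=
      le_antisymm (by linarith [norm_nonneg (E2 x₀ * ψ x₀)]) (norm_nonneg _)
    have t2 : ‖E2 x₀ * ψ x₀‖ = 0 :=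
      le_antisymm (by linarith [norm_nonneg (E1 x₀ * φ x₀)]) (norm_nonneg _)
    rw [norm_eq_zero, mul_eq_zero] at t1 t2
    rcases hnz with h | h
    · exact h (t1.resolve_left (Complex.exp_ne_zero _))
    · exact h (t2.resolve_left (Complex.exp_ne_zero _))
  have hB0 : 0 ≤ ‖φ 0‖ * ((1 + |r₀|) * Real.exp M) := by positivity
  have hub : ∀ x ∈ Icc (0:ℝ) 1, ‖E1 x * φ x‖ ≤ ‖φ 0‖ * ((1 + |r₀|) * Real.exp M) :=
    fun x hx => by linarith [hap' x hx, norm_nonneg (E2 x * ψ x)]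
  have hvb : ∀ x ∈ Icc (0:ℝ) 1, ‖E2 x * ψ x‖ ≤ ‖φ 0‖ * ((1 + |r₀|) * Real.exp M) :=
    fun x hx => by linarith [hap' x hx, norm_nonneg (E1 x * φ x)]
  have d1 := est hpI hu hv hM0 hB0 hqB' hub hvb
  have d2 := est hqI hv hu hM0 hB0 hpB' hvb hub
  beta_reduce at d1 d2
  rw [hE10, one_mul] at d1
  rw [hE20, one_mul, b0] at d2
  have n1 := (abs_norm_sub_norm_le _ _).trans d1
  have n2 := (abs_norm_sub_norm_le _ _).trans d2
  rw [norm_mul, nE1, b1, norm_mul, Complex.norm_real, Real.norm_eq_abs] at n1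
  rw [norm_mul, nE2, norm_mul, Complex.norm_real, Real.norm_eq_abs] at n2
  have hSe : S * Real.exp (-α 1) = Real.exp (δ 1) := by
    rw [hS, ← Real.exp_add]; congr 1; ring
  have m1 := mul_le_mul_of_nonneg_left n1 hS0.le
  have m2 := mul_le_mul_of_nonneg_left n2 (abs_nonneg r₁)
  rw [← abs_of_pos hS0, ← abs_mul, abs_of_pos hS0] at m1
  rw [← abs_abs r₁, ← abs_mul, abs_abs] at m2
  have tri := abs_sub (|r₁| * (Real.exp (δ 1) * ‖ψ 1‖ - |r₀| * ‖φ 0‖))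
    (S * (Real.exp (-α 1) * (|r₁| * ‖ψ 1‖) - ‖φ 0‖))
  have heq : |r₁| * (Real.exp (δ 1) * ‖ψ 1‖ - |r₀| * ‖φ 0‖) -
      S * (Real.exp (-α 1) * (|r₁| * ‖ψ 1‖) - ‖φ 0‖) = ‖φ 0‖ * (S - |r₀ * r₁|) := by
    rw [abs_mul, ← hSe]; ring
  rw [heq, abs_mul, abs_of_pos hφ0] at tri
  refine le_of_mul_le_mul_left ?_ hφ0
  calc _ ≤ _ := tri
    _ ≤ _ := add_le_add m2 m1
    _ = _ := by rw [hK]; ring
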